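/- Let F be a Ferrers diagram of semiperimeter n+1 and let c' ∈ Rec(G(F)) with CanonTop(c') = (U^0, V^1, U^1, …). Define the configuration c = minrec(c') by: c_j = |{ℓ ∈ V^k : j < ℓ and k > i}| if j ∈ U^i, and c_j = |{ℓ ∈ U^k : ℓ < j and k ≥ i}| if j ∈ V^i. Then c is a minimal recurrent configuration on G(F) (i.e., c ∈ Rec_min(G(F))) and CanonTop(c) = CanonTop(c'). -/

import Mathlib

open Classical

/-- A Ferrers diagram of semiperimeter `n + 1`, encoded by the set of its row labels
(labels `0, …, n` run along the south-east border; `0` labels the top row and the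
last label `n` is a column label). -/
structure Ferrers (n : ℕ) where
  rows : Finset (Fin (n + 1))
  zero_mem : 0 ∈ rows
  last_not_mem : Fin.last n ∉ rows

namespace Ferrers

/-- `(i, j)` is a cell of the diagram: `i` is a row label, `j` a column label, `i < j`. -/
def Cell {n : ℕ} (F : Ferrers n) (i j : Fin (n + 1)) : Prop :=
  i ∈ F.rows ∧ j ∉ F.rows ∧ i < j

/-- Adjacency in the Ferrers graph `G(F)`. -/
def Adj {n : ℕ} (F : Ferrers n) (u v : Fin (n + 1)) : Prop :=
  F.Cell u v ∨ F.Cell v u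

/-- Degree of a vertex in `G(F)`. -/
noncomputable def deg {n : ℕ} (F : Ferrers n) (v : Fin (n + 1)) : ℕ :=
  {u | F.Adj v u}.ncard

/-- Toppling a single vertex.  The height at the sink `0` is kept equal to `c 0`
(grains sent to the sink vanish); toppling the sink sends one grain to each of
its neighbours. -/
noncomputable def topple {n : ℕ} (F : Ferrers n) (c : Fin (n + 1) → ℕ)
    (v : Fin (n + 1)) : Fin (n + 1) → ℕ :=
  fun u =>
    if u = 0 then c 0
    else if u = v then c v - F.deg v
    else if F.Adj v u then c u + 1
    else c u

/-- Toppling the vertices of a list in order. -/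
noncomputable def toppleList {n : ℕ} (F : Ferrers n) (c : Fin (n + 1) → ℕ)
    (l : List (Fin (n + 1))) : Fin (n + 1) → ℕ :=
  l.foldl F.topple c

/-- Simultaneous toppling of a set of vertices. -/
noncomputable def toppleSet {n : ℕ} (F : Ferrers n) (c : Fin (n + 1) → ℕ)
    (S : Set (Fin (n + 1))) : Fin (n + 1) → ℕ :=
  fun u =>
    if u = 0 then c 0
    else c u + {w ∈ S | F.Adj w u}.ncard - if u ∈ S then F.deg u else 0

/-- A configuration is stable if every non-sink vertex has fewer grains than its degree. -/
def Stable {n : ℕ} (F : Ferrers n) (c : Fin (n + 1) → ℕ) : Prop :=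
  ∀ v, v ≠ 0 → c v < F.deg v

/-- A Dhar (burning) ordering for `c`: an ordering `v₀ = 0, v₁, …, vₙ` of all the
vertices such that each `vᵢ` (`i ≥ 1`) is unstable after toppling `v₀, …, v_{i-1}`. -/
def DharSeq {n : ℕ} (F : Ferrers n) (c : Fin (n + 1) → ℕ) (l : List (Fin (n + 1))) : Prop :=
  l.length = n + 1 ∧ l.Nodup ∧ l.head? = some 0 ∧
    ∀ i, ∀ h : i < l.length, 1 ≤ i →
      F.deg (l.get ⟨i, h⟩) ≤ F.toppleList c (l.take i) (l.get ⟨i, h⟩)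

/-- Recurrent configurations (via Dhar's criterion).  The height at the sink is
normalised to `0`. -/
def Recurrent {n : ℕ} (F : Ferrers n) (c : Fin (n + 1) → ℕ) : Prop :=
  c 0 = 0 ∧ F.Stable c ∧ ∃ l, F.DharSeq c l

/-- Minimal recurrent configurations: recurrent with minimal total number of grains. -/
def RecMin {n : ℕ} (F : Ferrers n) (c : Fin (n + 1) → ℕ) : Prop :=
  F.Recurrent c ∧ ∀ c', F.Recurrent c' → (∑ v, c v) ≤ ∑ v, c' v

/-- Canonical toppling: block `0` is `{0}` (the sink); from then on, blocks with odd
index are the sets of currently unstable column vertices and blocks with even index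
the sets of currently unstable row vertices.  The first component is the configuration
just before toppling the block recorded in the second component. -/
noncomputable def canonAux {n : ℕ} (F : Ferrers n) (c : Fin (n + 1) → ℕ) :
    ℕ → ((Fin (n + 1) → ℕ) × Set (Fin (n + 1)))
  | 0 => (c, {0})
  | k + 1 =>
    let c' := F.toppleSet (canonAux F c k).1 (canonAux F c k).2
    (c', {v | v ≠ 0 ∧ (if k % 2 = 0 then v ∉ F.rows else v ∈ F.rows) ∧ F.deg v ≤ c' v})

/-- The `k`-th block of the canonical toppling of `c`:
`canonTop F c 0 = U⁰ = {0}`, `canonTop F c (2i-1) = Vⁱ`, `canonTop F c (2i) = Uⁱ`. -/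
noncomputable def canonTop {n : ℕ} (F : Ferrers n) (c : Fin (n + 1) → ℕ) (k : ℕ) :
    Set (Fin (n + 1)) :=
  (F.canonAux c k).2

/-- The configuration just before toppling the `k`-th block of the canonical toppling. -/
noncomputable def canonConfig {n : ℕ} (F : Ferrers n) (c : Fin (n + 1) → ℕ) (k : ℕ) :
    Fin (n + 1) → ℕ :=
  (F.canonAux c k).1

/-- The index of the block of the canonical toppling of `c` containing `v`. -/
noncomputable def bIdx {n : ℕ} (F : Ferrers n) (c : Fin (n + 1) → ℕ) (v : Fin (n + 1)) : ℕ :=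
  sInf {k | v ∈ F.canonTop c k}

/-- `T` is a EW-tableau on `F` (entries of non-cells are normalised to `false`):
the top row contains only `1`s, every other row contains a `0`, and there is no
rectangle with two diagonally opposite `0`s and two `1`s in the other corners. -/
def IsEW {n : ℕ} (F : Ferrers n) (T : Fin (n + 1) → Fin (n + 1) → Bool) : Prop :=
  (∀ i j, ¬F.Cell i j → T i j = false) ∧
  (∀ j, F.Cell 0 j → T 0 j = true) ∧
  (∀ i, i ∈ F.rows → i ≠ 0 → ∃ j, F.Cell i j ∧ T i j = false) ∧
  (∀ i i' j j', F.Cell i j → F.Cell i j' → F.Cell i' j → F.Cell i' j' →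
    T i j = T i' j' → T i j' = T i' j → T i j = T i j')

/-- The configuration associated to a tableau: row vertices count the `1`s in their
row, column vertices count the `0`s in their column (the sink is normalised to `0`). -/
noncomputable def phiTC {n : ℕ} (F : Ferrers n) (T : Fin (n + 1) → Fin (n + 1) → Bool) :
    Fin (n + 1) → ℕ :=
  fun v =>
    if v = 0 then 0
    else if v ∈ F.rows then {j | F.Cell v j ∧ T v j = true}.ncard
    else {i | F.Cell i v ∧ T i v = false}.ncard

/-- The tableau associated to a (minimal recurrent) configuration: a cell `(i, j)`
gets a `1` exactly when `i` lies in an earlier block than `j` in the canonical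
toppling of `c`. -/
noncomputable def phiCT {n : ℕ} (F : Ferrers n) (c : Fin (n + 1) → ℕ) :
    Fin (n + 1) → Fin (n + 1) → Bool :=
  fun i j => if F.Cell i j ∧ F.bIdx c i < F.bIdx c j then true else false

/-- The supplementary tableau of `T`: `S i j = 1` exactly when the row vertex `i`
lies in an earlier block than the column vertex `j` in `CanonTop (φ_TC T)`. -/
noncomputable def suppS {n : ℕ} (F : Ferrers n) (T : Fin (n + 1) → Fin (n + 1) → Bool)
    (i j : Fin (n + 1)) : Bool :=
  if F.bIdx (F.phiTC T) i < F.bIdx (F.phiTC T) j then true else false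

/-- The entry of `T` in cell `(j, k)` is a cornersupport entry. -/
def Cornersupport {n : ℕ} (F : Ferrers n) (T : Fin (n + 1) → Fin (n + 1) → Bool)
    (j k : Fin (n + 1)) : Prop :=
  ∃ j' k', j' ∈ F.rows ∧ k' ∉ F.rows ∧ j' ≠ j ∧ k' ≠ k ∧
    F.suppS T j' k' = !(T j k) ∧ F.suppS T j' k = T j k ∧ F.suppS T j k' = T j k

/-- `ν_v(T)`: the number of non-cornersupport `0`s in row `v` (if `v` is a row label),
resp. non-cornersupport `1`s in column `v` (if `v` is a column label). -/
noncomputable def nu {n : ℕ} (F : Ferrers n) (T : Fin (n + 1) → Fin (n + 1) → Bool)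
    (v : Fin (n + 1)) : ℕ :=
  if v ∈ F.rows then {k | F.Cell v k ∧ T v k = false ∧ ¬F.Cornersupport T v k}.ncard
  else {i | F.Cell i v ∧ T i v = true ∧ ¬F.Cornersupport T i v}.ncard

/-- `μ_v(c)`: if `v ∈ Uⁱ`, the number of `k ∈ Vⁱ` with `k > v`; if `v ∈ Vⁱ`,
the number of `k ∈ U^{i-1}` with `k < v`.  In both cases the relevant block is the
one immediately preceding the block of `v`. -/
noncomputable def mu {n : ℕ} (F : Ferrers n) (c : Fin (n + 1) → ℕ) (v : Fin (n + 1)) : ℕ :=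
  if v ∈ F.rows then {k | v < k ∧ k ∈ F.canonTop c (F.bIdx c v - 1)}.ncard
  else {k | k < v ∧ k ∈ F.canonTop c (F.bIdx c v - 1)}.ncard

/-- The minimal recurrent configuration with the same canonical toppling as `c`:
if `j ∈ Uⁱ` then `minrec c j = |{ℓ ∈ Vᵏ : j < ℓ, k > i}|`, and if `j ∈ Vⁱ` then
`minrec c j = |{ℓ ∈ Uᵏ : ℓ < j, k ≥ i}|` (blocks `Vᵏ` sit at odd index `2k - 1`,
blocks `Uᵏ` at even index `2k`). -/
noncomputable def minrecFun {n : ℕ} (F : Ferrers n) (c : Fin (n + 1) → ℕ) :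
    Fin (n + 1) → ℕ :=
  fun j =>
    if j = 0 then 0
    else if j ∈ F.rows then
      {l | j < l ∧ ∃ k, F.bIdx c j < 2 * k + 1 ∧ l ∈ F.canonTop c (2 * k + 1)}.ncard
    else
      {l | l < j ∧ ∃ k, F.bIdx c j < 2 * k ∧ l ∈ F.canonTop c (2 * k)}.ncard

/-- The number of edges of `G(F)` (equivalently, the number of cells of `F`). -/
noncomputable def edgeCount {n : ℕ} (F : Ferrers n) : ℕ :=
  {p : Fin (n + 1) × Fin (n + 1) | F.Cell p.1 p.2}.ncard

end Ferrers

/-!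
An ordering `r` of the vertices that starts at the sink and separates neighbours burns `c` when
each other vertex `v` satisfies `deg v ≤ c v + #(earlier neighbours of v)`, that is, when
`#(later neighbours of v) ≤ c v`. Every edge is counted once, at its earlier endpoint, so summing
this bound shows that a recurrent configuration has at least `|E| - deg 0` grains, and that the
bound is attained when every `c v` equals the number of later neighbours.

Apply this to the block index of the canonical toppling of `c'`. Blocks alternate between rows and
columns, so `minrec c'` counts exactly the later neighbours: it is recurrent, minimal, and pointwise
at most `c'`. Having no more grains than `c'`, it cannot topple a vertex earlier than `c'` does,
while by construction each vertex is unstable once all earlier blocks of `c'` have toppled; hence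
the two canonical topplings agree.
-/

theorem idxOf_ofFn_of_injective {α : Type*} [DecidableEq α] {m : ℕ} {f : Fin m → α}
    (hf : Function.Injective f) (i : Fin m) : (List.ofFn f).idxOf (f i) = i := by
  rw [← List.Nodup.idxOf_getElem (List.nodup_ofFn.2 hf) i (by rw [List.length_ofFn]; exact i.2),
    List.getElem_ofFn]

namespace Ferrers

variable {n : ℕ} {F : Ferrers n}

theorem Adj.symm {u v : Fin (n + 1)} (h : F.Adj u v) : F.Adj v u :=
  Or.symm h

theorem Adj.ne {u v : Fin (n + 1)} (h : F.Adj u v) : u ≠ v :=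
  h.elim (fun h => h.2.2.ne) fun h => h.2.2.ne'

/-- The number of neighbours of `v` in `S`: what `v` receives when `S` topples. -/
noncomputable def degIn (F : Ferrers n) (S : Set (Fin (n + 1))) (v : Fin (n + 1)) : ℕ :=
  {w ∈ S | F.Adj w v}.ncard

section degIn

variable {S T : Set (Fin (n + 1))} {v : Fin (n + 1)}

theorem degIn_mono (h : S ⊆ T) : F.degIn S v ≤ F.degIn T v :=
  Set.ncard_le_ncard fun _ hw => ⟨h hw.1, hw.2⟩

theorem degIn_congr (h : ∀ w, F.Adj w v → (w ∈ S ↔ w ∈ T)) : F.degIn S v = F.degIn T v :=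
  congrArg Set.ncard (Set.ext fun w => and_congr_left (h w))

theorem degIn_univ (F : Ferrers n) (v : Fin (n + 1)) : F.degIn Set.univ v = F.deg v :=
  congrArg Set.ncard (Set.ext fun _ => ⟨fun h => h.2.symm, fun h => ⟨trivial, Adj.symm h⟩⟩)

theorem degIn_le_deg (F : Ferrers n) (S : Set (Fin (n + 1))) (v : Fin (n + 1)) :
    F.degIn S v ≤ F.deg v :=
  (degIn_mono (Set.subset_univ S)).trans_eq (F.degIn_univ v)

theorem degIn_empty (F : Ferrers n) (v : Fin (n + 1)) : F.degIn ∅ v = 0 := by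
  simp [degIn]

theorem degIn_eq_sum (F : Ferrers n) (S : Set (Fin (n + 1))) (v : Fin (n + 1)) :
    F.degIn S v = ∑ w, if w ∈ S ∧ F.Adj w v then 1 else 0 := by
  simp [degIn, Set.ncard_eq_toFinset_card', Finset.sum_boole]

theorem degIn_union (h : Disjoint S T) (v : Fin (n + 1)) :
    F.degIn (S ∪ T) v = F.degIn S v + F.degIn T v := by
  rw [degIn, degIn, degIn, ← Set.ncard_union_eq (h.mono (Set.sep_subset _ _) (Set.sep_subset _ _))]
  exact congrArg Set.ncard Set.sep_union

theorem degIn_insert {a : Fin (n + 1)} (ha : a ∉ S) (v : Fin (n + 1)) :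
    F.degIn (insert a S) v = (if F.Adj a v then 1 else 0) + F.degIn S v := by
  rw [Set.insert_eq, degIn_union (Set.disjoint_singleton_left.2 ha)]
  simp [degIn_eq_sum F {a}, ite_and]

end degIn

section Rank

variable {c r s : Fin (n + 1) → ℕ} {v : Fin (n + 1)}

/-- The number of neighbours of `v` that come before `v` in the ordering by `r`. -/
noncomputable def earlierDeg (F : Ferrers n) (r : Fin (n + 1) → ℕ) (v : Fin (n + 1)) : ℕ :=
  F.degIn {w | r w < r v} v

/-- The number of neighbours of `v` that come after `v` in the ordering by `r`. -/
noncomputable def laterDeg (F : Ferrers n) (r : Fin (n + 1) → ℕ) (v : Fin (n + 1)) : ℕ :=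
  F.degIn {w | r v < r w} v

theorem earlierDeg_add_laterDeg (hr : ∀ u v, F.Adj u v → r u ≠ r v) (v : Fin (n + 1)) :
    F.earlierDeg r v + F.laterDeg r v = F.deg v := by
  have hdisj : Disjoint {w | r w < r v} {w | r v < r w} :=
    Set.disjoint_left.2 fun _ hlt hgt => lt_asymm (Set.mem_ofPred.1 hlt) hgt
  rw [earlierDeg, laterDeg, ← degIn_union hdisj, ← degIn_univ]
  exact degIn_congr fun w hw => iff_of_true (lt_or_gt_of_ne (hr w v hw)) trivial

theorem edgeCount_eq_sum (F : Ferrers n) :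
    F.edgeCount = ∑ v, ∑ w, if F.Cell v w then 1 else 0 := by
  rw [← Fintype.sum_prod_type' fun v w => if F.Cell v w then 1 else 0]
  simp [edgeCount, Set.ncard_eq_toFinset_card', Finset.sum_boole]

theorem sum_laterDeg (hr : ∀ u v, F.Adj u v → r u ≠ r v) :
    ∑ v, F.laterDeg r v = F.edgeCount := by
  calc ∑ v, F.laterDeg r v
      = ∑ v, ∑ w, ((if F.Cell v w ∧ r v < r w then 1 else 0) +
          if F.Cell w v ∧ r v < r w then 1 else 0) := by
        simp only [laterDeg, degIn_eq_sum, Set.mem_ofPred_eq]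
        refine Finset.sum_congr rfl fun v _ => Finset.sum_congr rfl fun w _ => ?_
        have hasymm : F.Cell v w → ¬F.Cell w v := fun h h' => lt_asymm h.2.2 h'.2.2
        grind [Adj]
    _ = ∑ v, ∑ w, ((if F.Cell v w ∧ r v < r w then 1 else 0) +
          if F.Cell v w ∧ r w < r v then 1 else 0) := by
        simp only [Finset.sum_add_distrib]
        rw [Finset.sum_comm (f := fun v w => if F.Cell w v ∧ r v < r w then 1 else 0)]
    _ = F.edgeCount := by
        rw [edgeCount_eq_sum]
        refine Finset.sum_congr rfl fun v _ => Finset.sum_congr rfl fun w _ => ?_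
        have hne : F.Cell v w → r v ≠ r w := fun h => hr v w (Or.inl h)
        grind

/-- `r` ranks the sink strictly first and separates adjacent vertices: it orients the graph
acyclically, each edge pointing to its endpoint of larger rank, with the sink coming before all
other vertices. Non-adjacent vertices may share a rank, so that both the positions in a Dhar
ordering and the block indices of a canonical toppling qualify. -/
structure IsRootedRank (F : Ferrers n) (r : Fin (n + 1) → ℕ) : Prop where
  ne_of_adj : ∀ u v, F.Adj u v → r u ≠ r v
  zero_lt : ∀ v, v ≠ 0 → r 0 < r v

/-- `r` describes an order in which `c` burns: every vertex other than the sink is unstable once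
its neighbours of smaller rank have toppled. -/
structure IsBurningRank (F : Ferrers n) (c r : Fin (n + 1) → ℕ) : Prop
    extends F.IsRootedRank r where
  unstable : ∀ v, v ≠ 0 → F.deg v ≤ c v + F.earlierDeg r v

namespace IsRootedRank

theorem laterDeg_zero (h : F.IsRootedRank r) : F.laterDeg r 0 = F.deg 0 := by
  rw [← degIn_univ]
  exact degIn_congr fun w hw => iff_of_true (h.zero_lt w hw.ne) trivial

theorem edgeCount_eq (h : F.IsRootedRank r) (h0 : c 0 = 0)
    (hc : ∀ v, v ≠ 0 → c v = F.laterDeg r v) : F.edgeCount = ∑ v, c v + F.deg 0 := by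
  rw [← sum_laterDeg h.ne_of_adj, Fin.sum_univ_succ, Fin.sum_univ_succ c, h.laterDeg_zero, h0,
    zero_add, Finset.sum_congr rfl fun i _ => (hc i.succ i.succ_ne_zero).symm, add_comm]

theorem isBurningRank_of_eq_laterDeg (h : F.IsRootedRank r)
    (hc : ∀ v, v ≠ 0 → c v = F.laterDeg r v) : F.IsBurningRank c r where
  toIsRootedRank := h
  unstable v hv := by rw [hc v hv, add_comm, earlierDeg_add_laterDeg h.ne_of_adj]

end IsRootedRank

namespace IsBurningRank

theorem laterDeg_le (h : F.IsBurningRank c r) (hv : v ≠ 0) : F.laterDeg r v ≤ c v := by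
  have hsplit := earlierDeg_add_laterDeg h.ne_of_adj v
  have hunstable := h.unstable v hv
  omega

theorem edgeCount_le (h : F.IsBurningRank c r) : F.edgeCount ≤ ∑ v, c v + F.deg 0 := by
  rw [← sum_laterDeg h.ne_of_adj, Fin.sum_univ_succ, Fin.sum_univ_succ c, h.laterDeg_zero]
  have hle : ∑ i : Fin n, F.laterDeg r i.succ ≤ ∑ i : Fin n, c i.succ :=
    Finset.sum_le_sum fun i _ => h.laterDeg_le i.succ_ne_zero
  omega

theorem refine (h : F.IsBurningRank c r) (hs : ∀ u v, r u < r v → s u < s v) :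
    F.IsBurningRank c s where
  ne_of_adj u v huv := (h.ne_of_adj u v huv).lt_or_gt.elim
    (fun hlt => (hs u v hlt).ne) fun hlt => (hs v u hlt).ne'
  zero_lt v hv := hs 0 v (h.zero_lt v hv)
  unstable v hv := (h.unstable v hv).trans <|
    Nat.add_le_add_left (degIn_mono fun w hw => hs w v hw) _

end IsBurningRank

end Rank

section Dhar

variable {c r : Fin (n + 1) → ℕ} {l : List (Fin (n + 1))} {u v : Fin (n + 1)}

theorem topple_of_ne (c : Fin (n + 1) → ℕ) (hu : u ≠ 0) (huv : u ≠ v) :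
    F.topple c v u = c u + if F.Adj v u then 1 else 0 := by
  rw [topple, if_neg hu, if_neg huv]
  split_ifs <;> rfl

theorem toppleList_of_notMem (c : Fin (n + 1) → ℕ) (hu : u ≠ 0) (hl : l.Nodup) (hul : u ∉ l) :
    F.toppleList c l u = c u + F.degIn {w | w ∈ l} u := by
  induction l generalizing c with
  | nil => simp [toppleList, degIn_empty]
  | cons a l ih =>
    obtain ⟨hal, hl⟩ := List.nodup_cons.1 hl
    obtain ⟨hua, hul⟩ := not_or.1 (mt List.mem_cons.2 hul)
    have hset : {w | w ∈ a :: l} = insert a {w | w ∈ l} := by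
      ext w
      simp
    calc F.toppleList c (a :: l) u
        = F.topple c a u + F.degIn {w | w ∈ l} u := ih (F.topple c a) hl hul
      _ = c u + F.degIn {w | w ∈ a :: l} u := by
        rw [topple_of_ne c hu hua, hset, degIn_insert hal, add_assoc]

theorem toppleList_take_idxOf (c : Fin (n + 1) → ℕ) (hl : l.Nodup) (hmem : ∀ v, v ∈ l)
    (hv : v ≠ 0) :
    F.toppleList c (l.take (l.idxOf v)) v = c v + F.earlierDeg (fun w => l.idxOf w) v := by
  have htake (w) : w ∈ l.take (l.idxOf v) ↔ l.idxOf w < l.idxOf v :=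
    List.mem_take_iff_idxOf_lt (hmem w)
  rw [toppleList_of_notMem c hv hl.take fun h => lt_irrefl _ ((htake v).1 h), earlierDeg]
  exact congrArg _ (degIn_congr fun w _ => htake w)

theorem dharSeq_iff_isBurningRank_idxOf : F.DharSeq c l ↔
    l.length = n + 1 ∧ l.Nodup ∧ l.head? = some 0 ∧ F.IsBurningRank c fun v => l.idxOf v := by
  refine and_congr_right fun hlen => and_congr_right fun hl => and_congr_right fun hhead => ?_
  have hmem (v) : v ∈ l := by
    have huniv : l.toFinset = Finset.univ := Finset.eq_univ_of_card _ <| by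
      rw [List.toFinset_card_of_nodup hl, hlen, Fintype.card_fin]
    exact List.mem_toFinset.1 (huniv ▸ Finset.mem_univ v)
  have hinj {u v} (h : l.idxOf u = l.idxOf v) : u = v := (List.idxOf_inj (hmem u)).1 h
  have hzero : l.idxOf 0 = 0 := by
    obtain ⟨t, rfl⟩ := List.head?_eq_some_iff.1 hhead
    exact List.idxOf_cons_self
  have hpos {v} (hv : v ≠ 0) : 0 < l.idxOf v :=
    Nat.pos_of_ne_zero fun h => hv (hinj (h.trans hzero.symm))
  constructor
  · refine fun h => ⟨⟨fun u v huv heq => huv.ne (hinj heq), fun v hv => ?_⟩, fun v hv => ?_⟩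
    · exact hzero.trans_lt (hpos hv)
    · have hunstable := h (l.idxOf v) (List.idxOf_lt_length_of_mem (hmem v)) (hpos hv)
      rwa [List.get_eq_getElem, List.getElem_idxOf, toppleList_take_idxOf c hl hmem hv]
        at hunstable
  · intro h i hi hipos
    have hidx : l.idxOf l[i] = i := hl.idxOf_getElem i hi
    have hne : l[i] ≠ 0 := fun h0 => by rw [h0] at hidx; omega
    have htake := toppleList_take_idxOf (F := F) c hl hmem hne
    rw [hidx] at htake
    exact (h.unstable _ hne).trans_eq htake.symm

theorem IsBurningRank.exists_dharSeq (h : F.IsBurningRank c r) : ∃ l, F.DharSeq c l := by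
  let σ := Tuple.sort r
  have hidx (i) : (List.ofFn σ).idxOf (σ i) = i := idxOf_ofFn_of_injective σ.injective i
  have hmono : ∀ u v, r u < r v → (List.ofFn σ).idxOf u < (List.ofFn σ).idxOf v := by
    refine σ.surjective.forall₂.2 fun i j hij => ?_
    rw [hidx, hidx]
    exact (Tuple.monotone_sort r).reflect_lt hij
  have hfirst : σ 0 = 0 := by
    by_contra hne
    have hlt := hmono 0 (σ 0) (h.zero_lt _ hne)
    rw [hidx] at hlt
    exact Nat.not_lt_zero _ hlt
  refine ⟨List.ofFn σ, dharSeq_iff_isBurningRank_idxOf.2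
    ⟨List.length_ofFn, List.nodup_ofFn.2 σ.injective, ?_, h.refine hmono⟩⟩
  rw [List.ofFn_succ, List.head?_cons, hfirst]

theorem recurrent_iff_exists_isBurningRank :
    F.Recurrent c ↔ c 0 = 0 ∧ F.Stable c ∧ ∃ r, F.IsBurningRank c r :=
  and_congr_right fun _ => and_congr_right fun _ =>
    ⟨fun ⟨_, hl⟩ => ⟨_, (dharSeq_iff_isBurningRank_idxOf.1 hl).2.2.2⟩,
      fun ⟨_, hr⟩ => hr.exists_dharSeq⟩

theorem IsRootedRank.recMin_of_eq_laterDeg (h : F.IsRootedRank r) (hstable : F.Stable c)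
    (h0 : c 0 = 0) (hc : ∀ v, v ≠ 0 → c v = F.laterDeg r v) : F.RecMin c := by
  refine ⟨recurrent_iff_exists_isBurningRank.2
    ⟨h0, hstable, r, h.isBurningRank_of_eq_laterDeg hc⟩, fun d hd => ?_⟩
  obtain ⟨-, -, s, hs⟩ := recurrent_iff_exists_isBurningRank.1 hd
  exact Nat.le_of_add_le_add_right ((h.edgeCount_eq h0 hc).symm.trans_le hs.edgeCount_le)

end Dhar

section CanonTop

variable {c c' : Fin (n + 1) → ℕ} {i j k : ℕ} {v : Fin (n + 1)}

/-- The vertices toppled in the blocks `0, …, k - 1` of the canonical toppling of `c`. -/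
def toppledBefore (F : Ferrers n) (c : Fin (n + 1) → ℕ) (k : ℕ) : Set (Fin (n + 1)) :=
  ⋃ i < k, F.canonTop c i

theorem mem_toppledBefore : v ∈ F.toppledBefore c k ↔ ∃ i < k, v ∈ F.canonTop c i := by
  simp [toppledBefore]

theorem toppledBefore_succ (F : Ferrers n) (c : Fin (n + 1) → ℕ) (k : ℕ) :
    F.toppledBefore c (k + 1) = F.toppledBefore c k ∪ F.canonTop c k :=
  Set.biUnion_lt_succ _ k

theorem mem_canonTop_zero : v ∈ F.canonTop c 0 ↔ v = 0 :=
  Iff.rfl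

theorem mem_canonTop_succ : v ∈ F.canonTop c (k + 1) ↔
    v ≠ 0 ∧ (Even k ↔ v ∉ F.rows) ∧ F.deg v ≤ F.canonConfig c (k + 1) v := by
  simp only [canonTop, canonConfig, canonAux, Set.mem_ofPred_eq, Nat.even_iff]
  split_ifs with h <;> simp [h]

theorem even_iff_mem_rows_of_mem_canonTop (h : v ∈ F.canonTop c k) : Even k ↔ v ∈ F.rows := by
  cases k with
  | zero => simp [mem_canonTop_zero.1 h, F.zero_mem]
  | succ k => rw [Nat.even_add_one, (mem_canonTop_succ.1 h).2.1, not_not]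

theorem deg_le_canonConfig (h : v ∈ F.canonTop c k) (hv : v ≠ 0) :
    F.deg v ≤ F.canonConfig c k v := by
  cases k with
  | zero => exact absurd h hv
  | succ k => exact (mem_canonTop_succ.1 h).2.2

-- Toppled vertices are unstable, so the subtraction in `toppleSet` does not truncate.
theorem canonConfig_succ_add_indicator (hv : v ≠ 0) :
    F.canonConfig c (k + 1) v + (F.canonTop c k).indicator F.deg v =
      F.canonConfig c k v + F.degIn (F.canonTop c k) v := by
  have hconfig : F.canonConfig c (k + 1) v = F.canonConfig c k v + F.degIn (F.canonTop c k) v -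
      if v ∈ F.canonTop c k then F.deg v else 0 :=
    if_neg hv
  rw [hconfig, Set.indicator_apply]
  refine Nat.sub_add_cancel ?_
  split_ifs with h
  · exact (deg_le_canonConfig h hv).trans (Nat.le_add_right _ _)
  · exact Nat.zero_le _

theorem canonConfig_add_indicator
    (hdisj : ∀ i < k, Disjoint (F.toppledBefore c i) (F.canonTop c i)) (hv : v ≠ 0) :
    F.canonConfig c k v + (F.toppledBefore c k).indicator F.deg v =
      c v + F.degIn (F.toppledBefore c k) v := by
  induction k with
  | zero => simp [toppledBefore, degIn_empty, canonConfig, canonAux]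
  | succ k ih =>
    have hk := hdisj k k.lt_succ_self
    have hih := ih fun i hi => hdisj i (hi.trans k.lt_succ_self)
    have hstep := canonConfig_succ_add_indicator (F := F) (c := c) (k := k) hv
    rw [toppledBefore_succ, degIn_union hk, Set.indicator_union_of_disjoint hk]
    dsimp only
    omega

namespace Stable

theorem mono (hc' : F.Stable c') (hle : ∀ v, v ≠ 0 → c v ≤ c' v) : F.Stable c :=
  fun v hv => (hle v hv).trans_lt (hc' v hv)

theorem disjoint_toppledBefore_canonTop (hc : F.Stable c) (k : ℕ) :
    Disjoint (F.toppledBefore c k) (F.canonTop c k) := by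
  induction k using Nat.strong_induction_on with
  | _ k ih =>
    refine Set.disjoint_left.2 fun v hbefore hv => ?_
    by_cases hv0 : v = 0
    · cases k with
      | zero => simp [toppledBefore] at hbefore
      | succ k => exact (mem_canonTop_succ.1 hv).1 hv0
    · have hconfig := canonConfig_add_indicator ih hv0
      rw [Set.indicator_of_mem hbefore] at hconfig
      have hunstable := deg_le_canonConfig hv hv0
      have hreceived := F.degIn_le_deg (F.toppledBefore c k) v
      have hstable := hc v hv0
      omega

theorem mem_canonTop_succ_iff (hc : F.Stable c) : v ∈ F.canonTop c (k + 1) ↔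
    v ≠ 0 ∧ (Even k ↔ v ∉ F.rows) ∧ v ∉ F.toppledBefore c (k + 1) ∧
      F.deg v ≤ c v + F.degIn (F.toppledBefore c (k + 1)) v := by
  have hconfig (hv : v ≠ 0) (hnot : v ∉ F.toppledBefore c (k + 1)) :
      F.canonConfig c (k + 1) v = c v + F.degIn (F.toppledBefore c (k + 1)) v := by
    simpa [hnot] using
      canonConfig_add_indicator (fun i (_ : i < k + 1) => hc.disjoint_toppledBefore_canonTop i) hv
  constructor
  · intro h
    have hnot := Set.disjoint_right.1 (hc.disjoint_toppledBefore_canonTop (k + 1)) h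
    obtain ⟨hv, hparity, hdeg⟩ := mem_canonTop_succ.1 h
    exact ⟨hv, hparity, hnot, hconfig hv hnot ▸ hdeg⟩
  · rintro ⟨hv, hparity, hnot, hdeg⟩
    exact mem_canonTop_succ.2 ⟨hv, hparity, hconfig hv hnot ▸ hdeg⟩

theorem canonTop_index_unique (hc : F.Stable c) (hi : v ∈ F.canonTop c i)
    (hj : v ∈ F.canonTop c j) : i = j := by
  have hnot {i j} (hi : v ∈ F.canonTop c i) (hj : v ∈ F.canonTop c j) : ¬i < j := fun hij =>
    Set.disjoint_left.1 (hc.disjoint_toppledBefore_canonTop j) (mem_toppledBefore.2 ⟨i, hij, hi⟩) hj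
  exact le_antisymm (not_lt.1 (hnot hj hi)) (not_lt.1 (hnot hi hj))

theorem bIdx_eq (hc : F.Stable c) (h : v ∈ F.canonTop c k) : F.bIdx c v = k :=
  hc.canonTop_index_unique (Nat.sInf_mem (s := {k | v ∈ F.canonTop c k}) ⟨k, h⟩) h

theorem canonTop_eq_of_le (hc' : F.Stable c') (hle : ∀ v, v ≠ 0 → c v ≤ c' v)
    (hunstable : ∀ k v, v ∈ F.canonTop c' k → v ≠ 0 →
      F.deg v ≤ c v + F.degIn (F.toppledBefore c' k) v) (k : ℕ) :
    F.canonTop c k = F.canonTop c' k := by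
  have hc : F.Stable c := hc'.mono hle
  induction k using Nat.strong_induction_on with
  | _ k ih =>
    cases k with
    | zero => rfl
    | succ k =>
      have hbefore : F.toppledBefore c (k + 1) = F.toppledBefore c' (k + 1) :=
        Set.iUnion₂_congr ih
      ext v
      rw [hc.mem_canonTop_succ_iff, hbefore]
      refine ⟨fun ⟨hv, hparity, hnot, hdeg⟩ => hc'.mem_canonTop_succ_iff.2
        ⟨hv, hparity, hnot, hdeg.trans (Nat.add_le_add_right (hle v hv) _)⟩, fun h => ?_⟩
      obtain ⟨hv, hparity, hnot, -⟩ := hc'.mem_canonTop_succ_iff.1 h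
      exact ⟨hv, hparity, hnot, hunstable (k + 1) v h hv⟩

end Stable

theorem exists_forall_mem_toppledBefore (F : Ferrers n) (c : Fin (n + 1) → ℕ) :
    ∃ K, ∀ k ≥ K, ∀ w i, w ∈ F.canonTop c i → w ∈ F.toppledBefore c k := by
  refine Filter.eventually_atTop.1 (Filter.eventually_all.2 fun w => ?_)
  by_cases hw : ∃ i, w ∈ F.canonTop c i
  · obtain ⟨i, hi⟩ := hw
    filter_upwards [Filter.eventually_gt_atTop i] with k hk _ _
    exact mem_toppledBefore.2 ⟨i, hk, hi⟩
  · exact Filter.Eventually.of_forall fun _ i hi => absurd ⟨i, hi⟩ hw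

theorem IsBurningRank.exists_mem_canonTop {r : Fin (n + 1) → ℕ} (h : F.IsBurningRank c r)
    (hc : F.Stable c) (v : Fin (n + 1)) : ∃ k, v ∈ F.canonTop c k := by
  induction hm : r v using Nat.strong_induction_on generalizing v with
  | _ m ih =>
    subst hm
    by_cases hv : v = 0
    · exact ⟨0, mem_canonTop_zero.2 hv⟩
    obtain ⟨K, hK⟩ := F.exists_forall_mem_toppledBefore c
    obtain ⟨k, hKk, hparity⟩ : ∃ k ≥ K, (Even k ↔ v ∉ F.rows) := by
      by_cases hrow : v ∈ F.rows
      · exact ⟨2 * K + 1, by omega, by simp [hrow]⟩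
      · exact ⟨2 * K, by omega, by simp [hrow]⟩
    by_cases hbefore : v ∈ F.toppledBefore c (k + 1)
    · obtain ⟨i, -, hi⟩ := mem_toppledBefore.1 hbefore
      exact ⟨i, hi⟩
    · have hearlier : {w | r w < r v} ⊆ F.toppledBefore c (k + 1) := fun w hw => by
        obtain ⟨i, hi⟩ := ih _ hw w rfl
        exact hK (k + 1) (by omega) w i hi
      exact ⟨k + 1, hc.mem_canonTop_succ_iff.2 ⟨hv, hparity, hbefore,
        (h.unstable v hv).trans (Nat.add_le_add_left (degIn_mono hearlier) _)⟩⟩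

namespace Recurrent

theorem mem_canonTop_iff (hc : F.Recurrent c) : v ∈ F.canonTop c k ↔ F.bIdx c v = k := by
  obtain ⟨-, hstable, r, hr⟩ := recurrent_iff_exists_isBurningRank.1 hc
  obtain ⟨i, hi⟩ := hr.exists_mem_canonTop hstable v
  rw [hstable.bIdx_eq hi]
  exact ⟨fun hk => hstable.canonTop_index_unique hi hk, fun h => h ▸ hi⟩

theorem even_bIdx (hc : F.Recurrent c) : Even (F.bIdx c v) ↔ v ∈ F.rows :=
  even_iff_mem_rows_of_mem_canonTop (hc.mem_canonTop_iff.2 rfl)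

theorem toppledBefore_eq (hc : F.Recurrent c) (k : ℕ) :
    F.toppledBefore c k = {w | F.bIdx c w < k} := by
  ext w
  simp [mem_toppledBefore, hc.mem_canonTop_iff]

theorem isBurningRank_bIdx (hc : F.Recurrent c) : F.IsBurningRank c (F.bIdx c) := by
  have hzero : F.bIdx c 0 = 0 := hc.mem_canonTop_iff.1 (mem_canonTop_zero.2 rfl)
  have hpos (v) (hv : v ≠ 0) : 0 < F.bIdx c v :=
    Nat.pos_of_ne_zero fun h => hv (mem_canonTop_zero.1 (hc.mem_canonTop_iff.2 h))
  refine ⟨⟨fun u v huv heq => ?_, fun v hv => hzero.trans_lt (hpos v hv)⟩, fun v hv => ?_⟩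
  · have hrows : u ∈ F.rows ↔ v ∈ F.rows := by rw [← hc.even_bIdx, heq, hc.even_bIdx]
    exact huv.elim (fun h => h.2.1 (hrows.1 h.1)) fun h => h.2.1 (hrows.2 h.1)
  · obtain ⟨k, hk : F.bIdx c v = k + 1⟩ := Nat.exists_eq_succ_of_ne_zero (hpos v hv).ne'
    have hdeg := (hc.2.1.mem_canonTop_succ_iff.1 (hc.mem_canonTop_iff.2 hk)).2.2.2
    rwa [hc.toppledBefore_eq, ← hk] at hdeg

theorem ncard_later_cols (hc : F.Recurrent c) (hv : v ∈ F.canonTop c (2 * i)) :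
    {l | v < l ∧ ∃ k, i ≤ k ∧ l ∈ F.canonTop c (2 * k + 1)}.ncard = F.laterDeg (F.bIdx c) v := by
  have hrow : v ∈ F.rows := (even_iff_mem_rows_of_mem_canonTop hv).1 (even_two_mul i)
  refine congrArg Set.ncard (Set.ext fun w => ?_)
  simp only [Set.mem_ofPred_eq, hc.mem_canonTop_iff, hc.mem_canonTop_iff.1 hv, Adj, Cell, hrow,
    not_true, false_and, and_false, false_or, true_and, ← hc.even_bIdx (v := w), Nat.not_even_iff]
  exact ⟨fun ⟨hlt, _, _, _⟩ => ⟨by omega, by omega, hlt⟩,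
    fun ⟨_, _, hlt⟩ => ⟨hlt, F.bIdx c w / 2, by omega, by omega⟩⟩

theorem ncard_later_rows (hc : F.Recurrent c) (hv : v ∈ F.canonTop c (2 * i + 1)) :
    {l | l < v ∧ ∃ k, i + 1 ≤ k ∧ l ∈ F.canonTop c (2 * k)}.ncard = F.laterDeg (F.bIdx c) v := by
  have hcol : v ∉ F.rows := fun h =>
    Nat.not_even_two_mul_add_one i ((even_iff_mem_rows_of_mem_canonTop hv).2 h)
  refine congrArg Set.ncard (Set.ext fun w => ?_)
  simp only [Set.mem_ofPred_eq, hc.mem_canonTop_iff, hc.mem_canonTop_iff.1 hv, Adj, Cell, hcol,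
    not_false_eq_true, true_and, false_and, or_false, ← hc.even_bIdx (v := w), Nat.even_iff]
  exact ⟨fun ⟨hlt, _, _, _⟩ => ⟨by omega, by omega, hlt⟩,
    fun ⟨_, _, hlt⟩ => ⟨hlt, F.bIdx c w / 2, by omega, by omega⟩⟩

theorem canonTop_eq_of_eq_laterDeg (hc' : F.Recurrent c')
    (hc : ∀ v, v ≠ 0 → c v = F.laterDeg (F.bIdx c') v) (k : ℕ) :
    F.canonTop c k = F.canonTop c' k := by
  have hburn := hc'.isBurningRank_bIdx
  refine hc'.2.1.canonTop_eq_of_le (fun v hv => (hc v hv).trans_le (hburn.laterDeg_le hv)) ?_ k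
  intro k v hk hv
  rw [hc'.toppledBefore_eq, ← hc'.mem_canonTop_iff.1 hk]
  exact (hburn.isBurningRank_of_eq_laterDeg hc).unstable v hv

end Recurrent

end CanonTop

end Ferrers

/-- Given a recurrent configuration `c'` on `G(F)`, the
configuration `c = minrec c'` defined by
`c_j = |{ℓ ∈ Vᵏ : j < ℓ, k > i}|` if `j ∈ Uⁱ` and
`c_j = |{ℓ ∈ Uᵏ : ℓ < j, k ≥ i}|` if `j ∈ Vⁱ`
is a minimal recurrent configuration with the same canonical toppling as `c'`.
(Recall `Uⁱ = canonTop c' (2i)` and `Vⁱ = canonTop c' (2i - 1)`.) -/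
theorem minrec_is_minimal_recurrent {n : ℕ} (F : Ferrers n)
    (c' c : Fin (n + 1) → ℕ) (hc' : F.Recurrent c') (hc0 : c 0 = 0)
    (hU : ∀ i : ℕ, ∀ j : Fin (n + 1), j ∈ F.canonTop c' (2 * i) → j ≠ 0 →
      c j = {l : Fin (n + 1) | j < l ∧ ∃ k, i ≤ k ∧ l ∈ F.canonTop c' (2 * k + 1)}.ncard)
    (hV : ∀ i : ℕ, ∀ j : Fin (n + 1), j ∈ F.canonTop c' (2 * i + 1) →
      c j = {l : Fin (n + 1) | l < j ∧ ∃ k, i + 1 ≤ k ∧ l ∈ F.canonTop c' (2 * k)}.ncard) :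
    F.RecMin c ∧ ∀ k, F.canonTop c k = F.canonTop c' k := by
  have hc : ∀ j, j ≠ 0 → c j = F.laterDeg (F.bIdx c') j := by
    intro j hj
    have hmem : j ∈ F.canonTop c' (F.bIdx c' j) := hc'.mem_canonTop_iff.2 rfl
    obtain ⟨i, hi | hi⟩ := Nat.even_or_odd' (F.bIdx c' j)
    · rw [hi] at hmem
      rw [hU i j hmem hj, hc'.ncard_later_cols hmem]
    · rw [hi] at hmem
      rw [hV i j hmem, hc'.ncard_later_rows hmem]
  have hburn : F.IsBurningRank c' (F.bIdx c') := hc'.isBurningRank_bIdx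
  have hstable : F.Stable c :=
    hc'.2.1.mono fun j hj => (hc j hj).trans_le (hburn.laterDeg_le hj)
  exact ⟨hburn.recMin_of_eq_laterDeg hstable hc0 hc, hc'.canonTop_eq_of_eq_laterDeg hc⟩
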